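/- Let q be a prime power and let f, g ∈ F_q[X] be coprime polynomials with f′g − g′f ∉ F_q[X^q], and set h = f/g. Let t be transcendental over F_q and let M_h be the splitting field of the polynomial f(X) − t·g(X) over the rational function field F_q(t). If h is good, i.e., there exists b ∈ P¹(F_q) such that #h⁻¹(b) = deg h, then the constant field of M_h is F_q: every element of M_h that is algebraic over F_q lies in the image of the canonical embedding of F_q into M_h. -/

import Mathlib

open Polynomial Finset

/-- The map `P¹(F) → P¹(F)` induced by the rational function `f/g`
(with `none` playing the role of `∞`). -/
def ratEval {F : Type*} [Field F] [DecidableEq F] (f g : Polynomial F) :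
    Option F → Option F
  | none =>
      if g.natDegree < f.natDegree then none
      else if f.natDegree = g.natDegree then some (f.leadingCoeff / g.leadingCoeff)
      else some 0
  | some x => if g.eval x = 0 then none else some (f.eval x / g.eval x)

/-!
Let `x` be an indeterminate. The field `F((x))`, realized as `FractionRing F⟦X⟧`, contains no
algebraic elements over `F` besides those of `F`, so it suffices to embed `M_h` into it over `F`.
Send `t` to `b + x` (to `1 / x` if `b = ∞`). Up to a unit, `f - t g` then has coefficients in
`F⟦X⟧` and reduces modulo `x` to the polynomial cutting out the affine part of `h⁻¹(b)`. As `h⁻¹(b)`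
has `deg h` points, this reduction splits with simple roots and loses at most one degree. Hensel's
lemma lifts its roots, which leaves a factor of degree at most one, so `f - t g` splits in `F((x))`.
-/

open IsLocalRing
open scoped PowerSeries

section HenselianLocalRing

variable {R : Type*} [CommRing R] [HenselianLocalRing R]

theorem exists_isRoot_of_map_residue_eq_one_add_C_mul_X {p : R[X]} (h₀ : p.coeff 0 = 1)
    {c : ResidueField R} (hc : c ≠ 0) (hp : p.map (residue R) = 1 + C c * X) :
    ∃ a, p.IsRoot a := by
  -- The reciprocal polynomial is monic, so the monic form of Hensel's lemma applies to it.
  have hmonic : p.reverse.Monic := by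
    rw [Monic, reverse_leadingCoeff, trailingCoeff_eq_coeff_zero (h₀ ▸ one_ne_zero), h₀]
  obtain ⟨N, hN⟩ : ∃ N, p.natDegree = N + 1 := by
    refine Nat.exists_eq_add_one.2 (lt_of_lt_of_le ?_ (natDegree_map_le (f := residue R)))
    rw [hp, add_comm, ← C_1, natDegree_linear hc]
    exact one_pos
  have hreverse : p.reverse.map (residue R) = X ^ N * (X + C c) := by
    rw [reverse, ← reflect_map, hp, hN, reflect_add, reflect_one,
      ← pow_one (X : (ResidueField R)[X]), reflect_C_mul_X_pow, revAt_le (by omega)]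
    simp only [pow_one, add_tsub_cancel_right]
    ring
  have hensel := ((HenselianLocalRing.TFAE R).out 0 1).1 ‹HenselianLocalRing R›
  obtain ⟨w, hw, hwc⟩ := hensel p.reverse hmonic (-c)
    (by simp [aeval_def, eval₂_eq_eval_map, hreverse])
    (by simp [aeval_def, eval₂_eq_eval_map, ← derivative_map, hreverse, hc])
  have hunit : IsUnit w := by
    rw [← residue_ne_zero_iff_isUnit, hwc]
    exact neg_ne_zero.2 hc
  let _ := hunit.invertible
  refine ⟨⅟w, (eval₂_reverse_eq_zero_iff (RingHom.id R) (⅟w) p).1 ?_⟩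
  simpa using hw

theorem exists_isRoot_mem_maximalIdeal {p : R[X]} (h₀ : p.coeff 0 ∈ maximalIdeal R)
    (h₁ : IsUnit (p.coeff 1)) : ∃ a ∈ maximalIdeal R, p.IsRoot a := by
  -- Writing `p = p₀ + X * d`, the substitution `a = p₀ * z` turns `p(a)` into `p₀ * q(z)`.
  set q : R[X] := 1 + X * p.divX.comp (C (p.coeff 0) * X) with hq
  have hq_residue : q.map (residue R) = 1 + C (residue R (p.coeff 1)) * X := by
    have h₀' : residue R (p.coeff 0) = 0 := (residue_eq_zero_iff _).2 h₀
    simp [hq, Polynomial.map_comp, h₀', ← coeff_zero_eq_eval_zero, X_mul_C]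
  obtain ⟨z, hz⟩ := exists_isRoot_of_map_residue_eq_one_add_C_mul_X (by simp [hq])
    ((residue_ne_zero_iff_isUnit _).2 h₁) hq_residue
  refine ⟨p.coeff 0 * z, Ideal.mul_mem_right z _ h₀, ?_⟩
  have hp_eval (y : R) : p.eval y = p.divX.eval y * y + p.coeff 0 := by
    conv_lhs => rw [← divX_mul_X_add p, eval_add, eval_mul, eval_X, eval_C]
  calc p.eval (p.coeff 0 * z) = p.coeff 0 * q.eval z := by
        simp only [hp_eval, hq, eval_add, eval_mul, eval_X, eval_C, eval_one, eval_comp]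
        ring
    _ = 0 := by rw [hz, mul_zero]

theorem exists_isRoot_sub_mem_maximalIdeal {p : R[X]} {a₀ : R}
    (h₀ : p.eval a₀ ∈ maximalIdeal R) (h₁ : IsUnit (p.derivative.eval a₀)) :
    ∃ a, p.IsRoot a ∧ a - a₀ ∈ maximalIdeal R := by
  obtain ⟨a, ha, hroot⟩ := exists_isRoot_mem_maximalIdeal (p := taylor a₀ p)
    (by rwa [taylor_coeff_zero]) (by rwa [taylor_coeff_one])
  exact ⟨a + a₀, by rwa [IsRoot, ← taylor_eval], by rwa [add_sub_cancel_right]⟩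

variable {k : Type*} [Field k] {φ : R →+* k}

theorem exists_isRoot_of_separable_map (hφ : Function.Surjective φ) {p : R[X]}
    (hp : (p.map φ).Separable) {a₀ : k} (ha₀ : (p.map φ).IsRoot a₀) :
    ∃ a, p.IsRoot a ∧ φ a = a₀ := by
  obtain ⟨b, rfl⟩ := hφ a₀
  have hker : ∀ x, x ∈ maximalIdeal R ↔ φ x = 0 := fun x => by
    rw [← IsLocalRing.ker_eq_maximalIdeal φ hφ, RingHom.mem_ker]
  have hder : φ (p.derivative.eval b) ≠ 0 := by
    have := hp.eval₂_derivative_ne_zero (RingHom.id k) ha₀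
    rwa [derivative_map, eval₂_id, eval_map_apply] at this
  obtain ⟨a, ha, hab⟩ := exists_isRoot_sub_mem_maximalIdeal (p := p) (a₀ := b)
    ((hker _).2 (by rwa [IsRoot, eval_map_apply] at ha₀))
    (by rwa [← IsLocalRing.notMem_maximalIdeal, hker])
  exact ⟨a, ha, by rwa [hker, map_sub, sub_eq_zero] at hab⟩

theorem natDegree_map_le_card_roots [IsDomain R] (hφ : Function.Surjective φ) {p : R[X]}
    (hsplits : (p.map φ).Splits) (hsep : (p.map φ).Separable) :
    (p.map φ).natDegree ≤ p.roots.card := by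
  have hp : p ≠ 0 := by
    rintro rfl
    exact hsep.ne_zero (Polynomial.map_zero φ)
  have hroots : (p.map φ).roots ≤ p.roots.map φ := by
    rw [Multiset.le_iff_subset (nodup_roots hsep)]
    intro a₀ ha₀
    obtain ⟨a, ha, rfl⟩ := exists_isRoot_of_separable_map hφ hsep (isRoot_of_mem_roots ha₀)
    exact Multiset.mem_map_of_mem φ ((mem_roots hp).2 ha)
  simpa [hsplits.natDegree_eq_card_roots] using Multiset.card_le_card hroots

end HenselianLocalRing

theorem splits_map_of_natDegree_le_card_roots_add_one {R K : Type*} [CommRing R] [IsDomain R]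
    [Field K] {p : R[X]} (hp : p.natDegree ≤ p.roots.card + 1) (ψ : R →+* K) :
    (p.map ψ).Splits := by
  obtain ⟨q, hq, hdeg, -⟩ := exists_prod_multiset_X_sub_C_mul p
  have hlin : (p.roots.map fun a => X - C a).prod.Splits := by
    refine Splits.multisetProd fun r hr => ?_
    obtain ⟨a, -, rfl⟩ := Multiset.mem_map.1 hr
    exact Splits.X_sub_C a
  have hq_natDegree : (q.map ψ).natDegree ≤ 1 := natDegree_map_le.trans (by omega)
  rw [← hq, Polynomial.map_mul]
  exact (hlin.map ψ).mul (Splits.of_natDegree_le_one hq_natDegree)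

theorem isIntegrallyClosedIn_of_algHom {k A : Type*} [Field k] [CommRing A] [IsDomain A]
    [Algebra k A] (φ : A →ₐ[k] k) : IsIntegrallyClosedIn k A := by
  refine isIntegrallyClosedIn_iff.2 ⟨FaithfulSMul.algebraMap_injective k A, fun {z} hz => ⟨φ z, ?_⟩⟩
  -- `z - φ z` is integral over a field, so it is zero or a unit; but `φ` kills it.
  by_contra hne
  have hunit : IsUnit (z - algebraMap k A (φ z)) :=
    IsArtinianRing.isUnit_of_isIntegral_of_nonZeroDivisor (hz.sub isIntegral_algebraMap)
      (mem_nonZeroDivisors_of_ne_zero (sub_ne_zero.2 (Ne.symm hne)))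
  simpa using hunit.map φ

theorem isIntegrallyClosedIn_trans (R A B : Type*) [CommRing R] [CommRing A] [CommRing B]
    [Algebra R A] [Algebra A B] [Algebra R B] [IsScalarTower R A B]
    [hRA : IsIntegrallyClosedIn R A] [hAB : IsIntegrallyClosedIn A B] :
    IsIntegrallyClosedIn R B := by
  have hA := (isIntegrallyClosedIn_iff.1 hAB).1
  refine isIntegrallyClosedIn_iff.2 ⟨?_, fun {z} hz => ?_⟩
  · rw [IsScalarTower.algebraMap_eq R A B]
    exact hA.comp (isIntegrallyClosedIn_iff.1 hRA).1
  · obtain ⟨y, rfl⟩ := IsIntegrallyClosedIn.isIntegral_iff.1 (hz.tower_top (A := A))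
    obtain ⟨c, rfl⟩ := IsIntegrallyClosedIn.isIntegral_iff.1 ((isIntegral_algebraMap_iff hA).1 hz)
    exact ⟨c, IsScalarTower.algebraMap_apply R A B c⟩

theorem isIntegrallyClosedIn_of_injective {R A B : Type*} [CommRing R] [CommRing A] [CommRing B]
    [Algebra R A] [Algebra R B] [hB : IsIntegrallyClosedIn R B] {φ : A →ₐ[R] B}
    (hφ : Function.Injective φ) : IsIntegrallyClosedIn R A := by
  refine isIntegrallyClosedIn_iff.2 ⟨?_, fun {z} hz => ?_⟩
  · have hinj := (isIntegrallyClosedIn_iff.1 hB).1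
    rw [← φ.comp_algebraMap] at hinj
    exact Function.Injective.of_comp (f := φ) hinj
  · obtain ⟨c, hc⟩ := IsIntegrallyClosedIn.isIntegral_iff.1 (hz.map φ)
    exact ⟨c, hφ ((φ.commutes c).trans hc)⟩

theorem isIntegrallyClosedIn_splittingField {F E K : Type*} [Field F] [Field E] [Field K]
    [Algebra F E] [Algebra F K] [IsIntegrallyClosedIn F K] (φ : E →ₐ[F] K) {P : E[X]}
    (hP : (P.map (φ : E →+* K)).Splits) : IsIntegrallyClosedIn F P.SplittingField := by
  let _ : Algebra E K := φ.toRingHom.toAlgebra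
  have : IsScalarTower F E K := .of_algebraMap_eq fun c => (φ.commutes c).symm
  let ψ : P.SplittingField →ₐ[F] K := (SplittingField.lift P hP).restrictScalars F
  exact isIntegrallyClosedIn_of_injective ψ.injective

theorem exists_ratFunc_algHom_X_eq {F K : Type*} [Field F] [Field K] [Algebra F K] {s : K}
    (hs : Transcendental F s) : ∃ φ : RatFunc F →ₐ[F] K, φ RatFunc.X = s :=
  ⟨(IntermediateField.val _).comp (RatFunc.algEquivOfTranscendental s hs).toAlgHom,
    RatFunc.algEquivOfTranscendental_X s hs⟩

section PowerSeries

variable {F : Type*} [Field F]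

instance henselianLocalRing_powerSeries : HenselianLocalRing F⟦X⟧ where
  is_henselian p hp a₀ h₀ h₁ := by
    rw [PowerSeries.maximalIdeal_eq_span_X] at h₀ ⊢
    exact HenselianRing.is_henselian p hp a₀ h₀ (h₁.map _)

instance isIntegrallyClosedIn_powerSeries : IsIntegrallyClosedIn F F⟦X⟧ :=
  isIntegrallyClosedIn_of_algHom
    { PowerSeries.constantCoeff with commutes' := PowerSeries.constantCoeff_C }

variable (K : Type*) [Field K] [Algebra F K] [Algebra F⟦X⟧ K] [IsScalarTower F F⟦X⟧ K]

theorem isIntegrallyClosedIn_of_isFractionRing_powerSeries [IsFractionRing F⟦X⟧ K] :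
    IsIntegrallyClosedIn F K :=
  isIntegrallyClosedIn_trans F F⟦X⟧ K

theorem transcendental_algebraMap_powerSeries_X [FaithfulSMul F⟦X⟧ K] :
    Transcendental F (algebraMap F⟦X⟧ K PowerSeries.X) := by
  intro halg
  have hX : IsIntegral F (PowerSeries.X : F⟦X⟧) :=
    (isIntegral_algebraMap_iff (FaithfulSMul.algebraMap_injective F⟦X⟧ K)).1 halg.isIntegral
  obtain ⟨c, hc⟩ := IsIntegrallyClosedIn.isIntegral_iff.1 hX
  simpa [PowerSeries.algebraMap_apply, PowerSeries.coeff_C] using congrArg (PowerSeries.coeff 1) hc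

theorem splits_map_sub_X_mul_map {u v : F[X]} (hsplits : u.Splits) (hsep : u.Separable)
    (hv : v.natDegree ≤ u.natDegree + 1) :
    (u.map (algebraMap F K) -
      C (algebraMap F⟦X⟧ K PowerSeries.X) * v.map (algebraMap F K)).Splits := by
  set p : F⟦X⟧[X] := u.map (algebraMap F F⟦X⟧) - C PowerSeries.X * v.map (algebraMap F F⟦X⟧)
    with hp
  have hp_residue : p.map PowerSeries.constantCoeff = u := by
    have hid : (PowerSeries.constantCoeff (R := F)).comp (algebraMap F F⟦X⟧) = RingHom.id F :=
      RingHom.ext PowerSeries.constantCoeff_C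
    simp only [hp, Polynomial.map_sub, Polynomial.map_mul, Polynomial.map_map, hid, map_C, map_id,
      PowerSeries.constantCoeff_X, C_0, zero_mul, sub_zero]
  have hp_natDegree : p.natDegree ≤ u.natDegree + 1 :=
    (natDegree_sub_le _ _).trans <| max_le (natDegree_map_le.trans (Nat.le_succ _))
      ((natDegree_C_mul_le _ _).trans (natDegree_map_le.trans hv))
  have hroots : u.natDegree ≤ p.roots.card := by
    have := natDegree_map_le_card_roots (p := p) PowerSeries.constantCoeff_surj
    rw [hp_residue] at this
    exact this hsplits hsep
  have hp_splits := splits_map_of_natDegree_le_card_roots_add_one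
    (hp_natDegree.trans (Nat.succ_le_succ hroots)) (algebraMap F⟦X⟧ K)
  simpa only [hp, Polynomial.map_sub, Polynomial.map_mul, Polynomial.map_map, map_C,
    ← IsScalarTower.algebraMap_eq] using hp_splits

end PowerSeries

section Fiber

variable {F : Type*} [Field F]

/-- The polynomial cutting out the affine part of the fiber of `f / g` over a point of `P¹(F)`:
`g` over `∞` (encoded as `none`) and `f - b * g` over `b ∈ F`. Seen as a binary form of degree
`max (deg f) (deg g)`, it vanishes at `∞` exactly when its degree drops. -/
noncomputable def fiberPoly (f g : F[X]) : Option F → F[X]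
  | none => g
  | some b => f - C b * g

theorem fiberPoly_ne_zero {f g : F[X]} (hcop : IsCoprime f g)
    (hdeg : 0 < max f.natDegree g.natDegree) (b : Option F) : fiberPoly f g b ≠ 0 := by
  intro h
  cases b with
  | none =>
    obtain rfl : g = 0 := h
    have hf := natDegree_eq_zero_of_isUnit (isCoprime_zero_right.1 hcop)
    simp only [hf, natDegree_zero, max_self, lt_irrefl] at hdeg
  | some b =>
    obtain rfl : f = C b * g := sub_eq_zero.1 h
    have hg := natDegree_eq_zero_of_isUnit (isCoprime_self.1 hcop.of_mul_left_right)
    have hf := natDegree_C_mul_le b g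
    omega

theorem natDegree_fiberPoly_le (f g : F[X]) (b : Option F) :
    (fiberPoly f g b).natDegree ≤ max f.natDegree g.natDegree := by
  cases b with
  | none => exact le_max_right _ _
  | some b => exact (natDegree_sub_le _ _).trans (max_le_max le_rfl (natDegree_C_mul_le _ _))

variable [DecidableEq F]

theorem eval_fiberPoly_eq_zero {f g : F[X]} {a : F} {b : Option F}
    (h : ratEval f g (some a) = b) : (fiberPoly f g b).eval a = 0 := by
  subst h
  by_cases hg : g.eval a = 0 <;> simp [ratEval, fiberPoly, hg]

theorem natDegree_fiberPoly_lt {f g : F[X]} (hdeg : 0 < max f.natDegree g.natDegree)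
    {b : Option F} (h : ratEval f g none = b) :
    (fiberPoly f g b).natDegree < max f.natDegree g.natDegree := by
  subst h
  rcases lt_trichotomy f.natDegree g.natDegree with hlt | heq | hgt
  · simpa [ratEval, fiberPoly, hlt.not_gt, hlt.ne] using hlt
  · have hg : g.leadingCoeff ≠ 0 := by
      rw [leadingCoeff_ne_zero]
      rintro rfl
      simp only [heq, natDegree_zero, max_self, lt_irrefl] at hdeg
    have hcoeff : (fiberPoly f g (ratEval f g none)).coeff g.natDegree = 0 := by
      have hf : f.coeff g.natDegree = f.leadingCoeff := by rw [← heq, coeff_natDegree]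
      simp [ratEval, fiberPoly, heq, hf, hg]
    refine lt_of_le_of_ne (natDegree_fiberPoly_le f g _) fun h => ?_
    rw [heq, max_self] at h hdeg
    rw [← h, coeff_natDegree, leadingCoeff_eq_zero] at hcoeff
    rw [hcoeff, natDegree_zero] at h
    exact hdeg.ne h
  · simp [ratEval, fiberPoly, hgt]

theorem natDegree_fiberPoly_le_card_eraseNone {f g : F[X]}
    (hdeg : 0 < max f.natDegree g.natDegree) {b : Option F} {S : Finset (Option F)}
    (hS : ∀ a ∈ S, ratEval f g a = b) (hcard : max f.natDegree g.natDegree ≤ #S) :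
    (fiberPoly f g b).natDegree ≤ #S.eraseNone := by
  by_cases hinf : none ∈ S
  · have := natDegree_fiberPoly_lt hdeg (hS none hinf)
    rw [card_eraseNone_of_mem hinf]
    omega
  · rw [card_eraseNone_of_not_mem hinf]
    exact (natDegree_fiberPoly_le f g b).trans hcard

theorem roots_fiberPoly {f g : F[X]} (hcop : IsCoprime f g)
    (hdeg : 0 < max f.natDegree g.natDegree) {b : Option F} {S : Finset (Option F)}
    (hS : ∀ a ∈ S, ratEval f g a = b) (hcard : max f.natDegree g.natDegree ≤ #S) :
    (fiberPoly f g b).roots = S.eraseNone.val :=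
  roots_eq_of_natDegree_le_card_of_ne_zero
    (fun _ ha => eval_fiberPoly_eq_zero (hS _ (mem_eraseNone.1 ha)))
    (natDegree_fiberPoly_le_card_eraseNone hdeg hS hcard) (fiberPoly_ne_zero hcop hdeg b)

theorem natDegree_fiberPoly {f g : F[X]} (hcop : IsCoprime f g)
    (hdeg : 0 < max f.natDegree g.natDegree) {b : Option F} {S : Finset (Option F)}
    (hS : ∀ a ∈ S, ratEval f g a = b) (hcard : max f.natDegree g.natDegree ≤ #S) :
    (fiberPoly f g b).natDegree = #S.eraseNone := by
  refine le_antisymm (natDegree_fiberPoly_le_card_eraseNone hdeg hS hcard) ?_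
  rw [← card_val, ← roots_fiberPoly hcop hdeg hS hcard]
  exact card_roots' _

theorem splits_fiberPoly {f g : F[X]} (hcop : IsCoprime f g)
    (hdeg : 0 < max f.natDegree g.natDegree) {b : Option F} {S : Finset (Option F)}
    (hS : ∀ a ∈ S, ratEval f g a = b) (hcard : max f.natDegree g.natDegree ≤ #S) :
    (fiberPoly f g b).Splits := by
  rw [splits_iff_card_roots, roots_fiberPoly hcop hdeg hS hcard, card_val,
    natDegree_fiberPoly hcop hdeg hS hcard]

theorem separable_fiberPoly {f g : F[X]} (hcop : IsCoprime f g)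
    (hdeg : 0 < max f.natDegree g.natDegree) {b : Option F} {S : Finset (Option F)}
    (hS : ∀ a ∈ S, ratEval f g a = b) (hcard : max f.natDegree g.natDegree ≤ #S) :
    (fiberPoly f g b).Separable := by
  rw [← nodup_roots_iff_of_splits (fiberPoly_ne_zero hcop hdeg b)
    (splits_fiberPoly hcop hdeg hS hcard), roots_fiberPoly hcop hdeg hS hcard]
  exact S.eraseNone.nodup

theorem max_natDegree_le_natDegree_fiberPoly_add_one {f g : F[X]} (hcop : IsCoprime f g)
    (hdeg : 0 < max f.natDegree g.natDegree) {b : Option F} {S : Finset (Option F)}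
    (hS : ∀ a ∈ S, ratEval f g a = b) (hcard : max f.natDegree g.natDegree ≤ #S) :
    max f.natDegree g.natDegree ≤ (fiberPoly f g b).natDegree + 1 := by
  refine hcard.trans ?_
  rw [natDegree_fiberPoly hcop hdeg hS hcard, ← card_insertNone, insertNone_eraseNone]
  exact card_le_card (subset_insert _ _)

theorem exists_transcendental_splits (K : Type*) [Field K] [Algebra F K] [Algebra F⟦X⟧ K]
    [IsScalarTower F F⟦X⟧ K] [FaithfulSMul F⟦X⟧ K] {f g : F[X]} (hcop : IsCoprime f g)
    {b : Option F} {S : Finset (Option F)} (hS : ∀ a ∈ S, ratEval f g a = b)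
    (hcard : max f.natDegree g.natDegree ≤ #S) :
    ∃ s : K, Transcendental F s ∧
      (f.map (algebraMap F K) - C s * g.map (algebraMap F K)).Splits := by
  let x : K := algebraMap F⟦X⟧ K PowerSeries.X
  have hx_transc : Transcendental F x := transcendental_algebraMap_powerSeries_X K
  rcases Nat.eq_zero_or_pos (max f.natDegree g.natDegree) with hzero | hpos
  · refine ⟨x, hx_transc, Splits.of_natDegree_le_one ?_⟩
    refine (natDegree_sub_le _ _).trans (max_le ?_ ?_)
    · exact natDegree_map_le.trans (by omega)
    · exact (natDegree_C_mul_le _ _).trans (natDegree_map_le.trans (by omega))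
  have hsplits := splits_fiberPoly hcop hpos hS hcard
  have hsep := separable_fiberPoly hcop hpos hS hcard
  have hdeg := max_natDegree_le_natDegree_fiberPoly_add_one hcop hpos hS hcard
  cases b with
  | none =>
    refine ⟨x⁻¹, mt IsAlgebraic.inv_iff.1 hx_transc, ?_⟩
    have hx_ne : x ≠ 0 := fun h => hx_transc (h ▸ isAlgebraic_zero)
    have hflip : f.map (algebraMap F K) - C x⁻¹ * g.map (algebraMap F K) =
        C (-x⁻¹) * (g.map (algebraMap F K) - C x * f.map (algebraMap F K)) := by
      rw [mul_sub, ← mul_assoc, ← C_mul, neg_mul, inv_mul_cancel₀ hx_ne]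
      simp only [C_neg, C_1]
      ring
    rw [hflip]
    exact (Splits.C _).mul
      (splits_map_sub_X_mul_map K hsplits hsep ((le_max_left _ _).trans hdeg))
  | some b =>
    refine ⟨x + algebraMap F K b, ?_, ?_⟩
    · exact fun halg => hx_transc (by simpa using halg.sub (isAlgebraic_algebraMap b))
    · have hshift : f.map (algebraMap F K) - C (x + algebraMap F K b) * g.map (algebraMap F K) =
          (fiberPoly f g (some b)).map (algebraMap F K) - C x * g.map (algebraMap F K) := by
        simp only [fiberPoly, Polynomial.map_sub, Polynomial.map_mul, map_C, C_add]
        ring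
      rw [hshift]
      exact splits_map_sub_X_mul_map K hsplits hsep ((le_max_right _ _).trans hdeg)

end Fiber

theorem stmt3_general {F : Type*} [Field F] [DecidableEq F] (f g : F[X]) (hcop : IsCoprime f g)
    (hgood : ∃ b : Option F,
      {a : Option F | ratEval f g a = b}.encard = max f.natDegree g.natDegree)
    (P : (RatFunc F)[X])
    (hP : P = f.map (algebraMap F (RatFunc F)) - C RatFunc.X * g.map (algebraMap F (RatFunc F))) :
    ∀ z : P.SplittingField, IsAlgebraic F z → ∃ c : F, algebraMap F P.SplittingField c = z := by
  obtain ⟨b, hb⟩ := hgood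
  have hfin := Set.finite_of_encard_eq_coe hb
  rw [hfin.encard_eq_coe_toFinset_card, Nat.cast_inj] at hb
  let K := FractionRing F⟦X⟧
  obtain ⟨s, hs, hsplits⟩ := exists_transcendental_splits K hcop
    (S := hfin.toFinset) (fun a ha => hfin.mem_toFinset.1 ha) hb.ge
  obtain ⟨φ, hφ⟩ := exists_ratFunc_algHom_X_eq hs
  have hP_map : P.map (φ : RatFunc F →+* K) =
      f.map (algebraMap F K) - C s * g.map (algebraMap F K) := by
    simp only [hP, Polynomial.map_sub, Polynomial.map_mul, Polynomial.map_map, φ.comp_algebraMap,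
      map_C, RingHom.coe_coe, hφ]
  have := isIntegrallyClosedIn_of_isFractionRing_powerSeries (F := F) K
  have := isIntegrallyClosedIn_splittingField φ (hP_map ▸ hsplits)
  exact fun z hz => IsIntegrallyClosedIn.isIntegral_iff.1 hz.isIntegral

/-- If the rational function `h = f/g` is good (some fiber of the induced map on
`P¹(F_q)` has `deg h` elements), then the constant field of the splitting field `M_h`
of `f(X) - t·g(X)` over `F_q(t)` is `F_q` itself: every element of `M_h` algebraic
over `F_q` lies in the image of `F_q`. -/
theorem stmt3 {F : Type*} [Field F] [Fintype F] [DecidableEq F]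
    (f g : Polynomial F) (hcop : IsCoprime f g)
    (hsep : ¬ ∃ p : Polynomial F,
        derivative f * g - derivative g * f = Polynomial.expand F (Fintype.card F) p)
    (hgood : ∃ b : Option F,
        (Finset.univ.filter (fun x : Option F => ratEval f g x = b)).card
          = max f.natDegree g.natDegree)
    (P : Polynomial (RatFunc F))
    (hP : P = f.map (algebraMap F (RatFunc F))
        - Polynomial.C RatFunc.X * g.map (algebraMap F (RatFunc F))) :
    ∀ z : P.SplittingField, IsAlgebraic F z →
      ∃ c : F, algebraMap F P.SplittingField c = z := by
  obtain ⟨b, hb⟩ := hgood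
  exact stmt3_general f g hcop
    ⟨b, by rw [← hb, ← Set.encard_coe_eq_coe_finsetCard, coe_filter_univ]⟩ P hP
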